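/- Let R ≥ 1, d ≥ 1, let V, A_1, …, A_R, B_1, …, B_R ∈ M_d(ℂ) with A_R invertible, and let E ∈ ℂ. Then for every nonzero λ ∈ ℂ: λ is an eigenvalue of the companion matrix C_E if and only if E is an eigenvalue of the Bloch Hamiltonian 𝐇(λ). -/

import Mathlib

/-!
STATEMENT 7. With `A_R` invertible: a nonzero `λ` is an eigenvalue of the companion
matrix `C_E` if and only if `E` is an eigenvalue of the Bloch Hamiltonian `𝐇(λ)`.
-/

open Matrix Finset

/-- The Bloch Hamiltonian `𝐇(λ) = V + ∑_{r=1}^R (λ^{−r}·B_r + λ^r·A_r)`. -/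
noncomputable def bloch (R d : ℕ) (V : Matrix (Fin d) (Fin d) ℂ)
    (A B : ℕ → Matrix (Fin d) (Fin d) ℂ) (z : ℂ) : Matrix (Fin d) (Fin d) ℂ :=
  V + ∑ r ∈ Finset.Icc 1 R, (z⁻¹ ^ r • B r + z ^ r • A r)

/-- The `j`-th block (0-indexed, `j = 0, …, 2R−1`) of the last block row of the
companion matrix: `(−A_R⁻¹ B_R, …, −A_R⁻¹ B_1, −A_R⁻¹ V_E, −A_R⁻¹ A_1, …, −A_R⁻¹ A_{R−1})`. -/
noncomputable def companionLastRow (R d : ℕ) (V : Matrix (Fin d) (Fin d) ℂ)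
    (A B : ℕ → Matrix (Fin d) (Fin d) ℂ) (E : ℂ) (j : ℕ) : Matrix (Fin d) (Fin d) ℂ :=
  if j < R then -((A R)⁻¹ * B (R - j))
  else if j = R then -((A R)⁻¹ * (V - E • (1 : Matrix (Fin d) (Fin d) ℂ)))
  else -((A R)⁻¹ * A (j - R))

/-- The companion matrix `C_E ∈ M_{2Rd}(ℂ)`, realized as a matrix indexed by
`Fin (2R) × Fin d` (block index × intra-block index): the `(i, i+1)` blocks are `1_d`
for `i = 0, …, 2R−2`, the last block row is `companionLastRow`, all other blocks `0`. -/
noncomputable def companion (R d : ℕ) (V : Matrix (Fin d) (Fin d) ℂ)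
    (A B : ℕ → Matrix (Fin d) (Fin d) ℂ) (E : ℂ) :
    Matrix (Fin (2 * R) × Fin d) (Fin (2 * R) × Fin d) ℂ :=
  fun p q =>
    if (p.1 : ℕ) + 1 = 2 * R then companionLastRow R d V A B E (q.1 : ℕ) p.2 q.2
    else if (q.1 : ℕ) = (p.1 : ℕ) + 1 then (1 : Matrix (Fin d) (Fin d) ℂ) p.2 q.2
    else 0

/-!
Away from the last block row, the equation `C_E x = λ x` says that each block of `x` is `λ` times
the previous one, so `x` has blocks `u, λ u, …, λ ^ (2R - 1) u`. The last block row, multiplied by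
`A_R`, then becomes `P(λ) u = 0`, where `P` is the matrix polynomial of degree `2R` with
coefficients `B_R, …, B_1, V_E, A_1, …, A_R`. Factoring out the middle power,
`P(λ) = λ ^ R (𝐇(λ) - E)`.
-/

section BlockCompanion

variable {K m : Type*} {n : ℕ}

/-- The block companion matrix with last block row `C`: identity blocks on the block superdiagonal
of the other rows, and `0` elsewhere. -/
def blockCompanion [Zero K] [One K] [DecidableEq m] (C : Fin n → Matrix m m K) :
    Matrix (Fin n × m) (Fin n × m) K :=
  fun p q =>
    if (p.1 : ℕ) + 1 = n then C q.1 p.2 q.2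
    else if (q.1 : ℕ) = (p.1 : ℕ) + 1 then (1 : Matrix m m K) p.2 q.2
    else 0

/-- The block vector `(u, z u, …, z ^ (n - 1) u)`, the shape of every eigenvector of a block
companion matrix. -/
def geometricBlocks [Monoid K] (n : ℕ) (z : K) (u : m → K) : Fin n × m → K :=
  fun p => z ^ (p.1 : ℕ) * u p.2

lemma geometricBlocks_eq_zero_iff [MonoidWithZero K] (hn : 0 < n) {z : K} {u : m → K} :
    geometricBlocks n z u = 0 ↔ u = 0 := by
  refine ⟨fun h => funext fun a => ?_, fun h => funext fun p => by simp [geometricBlocks, h]⟩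
  simpa [geometricBlocks] using congrFun h (⟨0, hn⟩, a)

lemma eq_geometricBlocks_of_forall_succ [Monoid K] (hn : 0 < n) {z : K} {x : Fin n × m → K}
    (hx : ∀ (i : ℕ) (hi : i + 1 < n) (a : m), x (⟨i + 1, hi⟩, a) = z * x (⟨i, by omega⟩, a)) :
    x = geometricBlocks n z fun a => x (⟨0, hn⟩, a) := by
  have hpow (i : ℕ) (hi : i < n) (a : m) : x (⟨i, hi⟩, a) = z ^ i * x (⟨0, hn⟩, a) := by
    induction i with
    | zero => simp
    | succ i ih => rw [hx, ih, pow_succ', mul_assoc]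
  exact funext fun ⟨⟨i, hi⟩, a⟩ => hpow i hi a

variable [Fintype m] [DecidableEq m]

lemma blockCompanion_mulVec_of_lt [NonAssocSemiring K] (C : Fin n → Matrix m m K)
    (x : Fin n × m → K) {i : ℕ} (hi : i + 1 < n) (a : m) :
    (blockCompanion C *ᵥ x) (⟨i, by omega⟩, a) = x (⟨i + 1, hi⟩, a) := by
  rw [mulVec, dotProduct, Fintype.sum_eq_single (⟨i + 1, hi⟩, a)]
  · simp [blockCompanion, hi.ne]
  · rintro ⟨j, b⟩ hne
    by_cases hj : (j : ℕ) = i + 1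
    · have hab : a ≠ b := by
        rintro rfl
        exact hne (Prod.ext (Fin.ext hj) rfl)
      simp [blockCompanion, hi.ne, hj, hab]
    · simp [blockCompanion, hi.ne, hj]

lemma blockCompanion_mulVec_last [NonAssocSemiring K] (C : Fin n → Matrix m m K)
    (x : Fin n × m → K) {i : Fin n} (hi : (i : ℕ) + 1 = n) (a : m) :
    (blockCompanion C *ᵥ x) (i, a) = ∑ j, (C j *ᵥ fun b => x (j, b)) a := by
  simp [mulVec, dotProduct, blockCompanion, hi, Fintype.sum_prod_type]

lemma blockCompanion_mulVec_geometricBlocks_last [CommSemiring K] (C : Fin n → Matrix m m K)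
    (z : K) (u : m → K) {i : Fin n} (hi : (i : ℕ) + 1 = n) (a : m) :
    (blockCompanion C *ᵥ geometricBlocks n z u) (i, a) =
      ((∑ j : Fin n, z ^ (j : ℕ) • C j) *ᵥ u) a := by
  have hblock (j : Fin n) :
      (fun b => geometricBlocks n z u (j, b)) = z ^ (j : ℕ) • u := rfl
  simp only [blockCompanion_mulVec_last C _ hi, hblock, sum_mulVec, Finset.sum_apply, mulVec_smul,
    smul_mulVec]

lemma blockCompanion_mulVec_geometricBlocks_eq_smul_iff [CommSemiring K] (hn : 0 < n)
    (C : Fin n → Matrix m m K) (z : K) (u : m → K) :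
    blockCompanion C *ᵥ geometricBlocks n z u = z • geometricBlocks n z u ↔
      (∑ j : Fin n, z ^ (j : ℕ) • C j) *ᵥ u = z ^ n • u := by
  have hsmul (i : Fin n) (a : m) :
      (z • geometricBlocks n z u) (i, a) = z ^ ((i : ℕ) + 1) * u a := by
    simp [geometricBlocks, pow_succ', mul_assoc]
  constructor
  · intro h
    have hlast : n - 1 + 1 = n := Nat.sub_add_cancel hn
    funext a
    rw [← blockCompanion_mulVec_geometricBlocks_last C z u (i := ⟨n - 1, by omega⟩) hlast, h,
      hsmul, hlast, Pi.smul_apply, smul_eq_mul]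
  · intro h
    ext ⟨i, a⟩
    rcases (show (i : ℕ) + 1 ≤ n from i.isLt).lt_or_eq with hi | hi
    · rw [hsmul]
      exact blockCompanion_mulVec_of_lt C _ hi a
    · rw [blockCompanion_mulVec_geometricBlocks_last C z u hi, h, hsmul, hi, Pi.smul_apply,
        smul_eq_mul]

lemma blockCompanion_mulVec_eq_smul_iff [CommSemiring K] (hn : 0 < n) (C : Fin n → Matrix m m K)
    (z : K) (x : Fin n × m → K) :
    blockCompanion C *ᵥ x = z • x ↔
      ∃ u, x = geometricBlocks n z u ∧ (∑ j : Fin n, z ^ (j : ℕ) • C j) *ᵥ u = z ^ n • u := by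
  constructor
  · intro h
    have hx : x = geometricBlocks n z fun a => x (⟨0, hn⟩, a) :=
      eq_geometricBlocks_of_forall_succ hn fun i hi a => by
        rw [← blockCompanion_mulVec_of_lt C x hi a, h, Pi.smul_apply, smul_eq_mul]
    refine ⟨_, hx, ?_⟩
    rwa [← blockCompanion_mulVec_geometricBlocks_eq_smul_iff hn, ← hx]
  · rintro ⟨u, rfl, hu⟩
    exact (blockCompanion_mulVec_geometricBlocks_eq_smul_iff hn C z u).2 hu

lemma sum_neg_inv_mul_mulVec_eq_iff [CommRing K] {c : ℕ → Matrix m m K} (hc : IsUnit (c n).det)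
    (z : K) (u : m → K) :
    (∑ j : Fin n, z ^ (j : ℕ) • -((c n)⁻¹ * c j)) *ᵥ u = z ^ n • u ↔
      (∑ j ∈ range (n + 1), z ^ j • c j) *ᵥ u = 0 := by
  have hmul : c n * ∑ j : Fin n, z ^ (j : ℕ) • -((c n)⁻¹ * c j) =
      -∑ j ∈ range n, z ^ j • c j := by
    simp [Finset.mul_sum, Finset.sum_range, mul_nonsing_inv_cancel_left _ _ hc]
  have hinj : Function.Injective (c n).mulVec :=
    mulVec_injective_of_isUnit ((isUnit_iff_isUnit_det _).2 hc)
  rw [← hinj.eq_iff, mulVec_mulVec, hmul, neg_mulVec, mulVec_smul, neg_eq_iff_add_eq_zero,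
    Finset.sum_range_succ, add_mulVec, smul_mulVec]

end BlockCompanion

lemma sum_range_two_mul_add_one {M : Type*} [AddCommMonoid M] (f : ℕ → M) (R : ℕ) :
    ∑ j ∈ range (2 * R + 1), f j = f R + ∑ r ∈ Icc 1 R, (f (R - r) + f (R + r)) := by
  have hbelow : ∑ j ∈ range R, f j = ∑ r ∈ Icc 1 R, f (R - r) := by
    rw [← Finset.sum_range_reflect, Finset.range_eq_Ico, ← Ico_add_one_right_eq_Icc,
      ← Finset.sum_Ico_add' _ 0 R 1]
    exact Finset.sum_congr rfl fun r _ => by rw [Nat.sub_sub, add_comm 1]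
  have habove : ∑ k ∈ range R, f (R + (k + 1)) = ∑ r ∈ Icc 1 R, f (R + r) := by
    rw [Finset.range_eq_Ico, ← Ico_add_one_right_eq_Icc]
    exact Finset.sum_Ico_add' (fun r => f (R + r)) 0 R 1
  rw [show 2 * R + 1 = R + (R + 1) by omega, Finset.sum_range_add, Finset.sum_range_succ', hbelow,
    habove, Finset.sum_add_distrib, add_zero, ← add_assoc, add_comm]

lemma sum_range_pow_smul_eq_pow_smul {K M : Type*} [DivisionSemiring K] [AddCommMonoid M]
    [Module K M] {z : K} (hz : z ≠ 0) (c : ℕ → M) (R : ℕ) :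
    ∑ j ∈ range (2 * R + 1), z ^ j • c j =
      z ^ R • (c R + ∑ r ∈ Icc 1 R, (z⁻¹ ^ r • c (R - r) + z ^ r • c (R + r))) := by
  rw [sum_range_two_mul_add_one, smul_add, Finset.smul_sum]
  congr 1
  refine Finset.sum_congr rfl fun r hr => ?_
  rw [smul_add, smul_smul, smul_smul, pow_sub₀ z hz (mem_Icc.1 hr).2, pow_add, inv_pow]

section Bloch

variable {R d : ℕ} (V : Matrix (Fin d) (Fin d) ℂ) (A B : ℕ → Matrix (Fin d) (Fin d) ℂ) (E : ℂ)

/-- The coefficient of `z ^ j` in the matrix polynomial `z ^ R (𝐇(z) - E)`: the sequence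
`B_R, …, B_1, V_E, A_1, …, A_R` for `j = 0, …, 2R`. -/
def blochCoeff (R : ℕ) (j : ℕ) : Matrix (Fin d) (Fin d) ℂ :=
  if j < R then B (R - j) else if j = R then V - E • 1 else A (j - R)

lemma blochCoeff_two_mul (hR : 1 ≤ R) : blochCoeff V A B E R (2 * R) = A R := by
  rw [blochCoeff, if_neg (by omega), if_neg (by omega), show 2 * R - R = R by omega]

lemma sum_pow_smul_blochCoeff {z : ℂ} (hz : z ≠ 0) :
    ∑ j ∈ range (2 * R + 1), z ^ j • blochCoeff V A B E R j =
      z ^ R • (bloch R d V A B z - E • 1) := by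
  have hmid : blochCoeff V A B E R R = V - E • 1 := by simp [blochCoeff]
  have hsum : ∑ r ∈ Icc 1 R,
      (z⁻¹ ^ r • blochCoeff V A B E R (R - r) + z ^ r • blochCoeff V A B E R (R + r)) =
      ∑ r ∈ Icc 1 R, (z⁻¹ ^ r • B r + z ^ r • A r) := by
    refine Finset.sum_congr rfl fun r hr => ?_
    obtain ⟨hr1, hrR⟩ := mem_Icc.1 hr
    have hlow : blochCoeff V A B E R (R - r) = B r := by
      rw [blochCoeff, if_pos (by omega), Nat.sub_sub_self hrR]
    have hhigh : blochCoeff V A B E R (R + r) = A r := by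
      rw [blochCoeff, if_neg (by omega), if_neg (by omega), Nat.add_sub_cancel_left]
    rw [hlow, hhigh]
  rw [sum_range_pow_smul_eq_pow_smul hz, hmid, hsum, bloch, sub_add_eq_add_sub]

lemma companionLastRow_eq_neg_inv_mul_blochCoeff (hR : 1 ≤ R) (j : ℕ) :
    companionLastRow R d V A B E j =
      -((blochCoeff V A B E R (2 * R))⁻¹ * blochCoeff V A B E R j) := by
  rw [blochCoeff_two_mul V A B E hR, companionLastRow, blochCoeff]
  split_ifs <;> rfl

lemma companion_eq_blockCompanion (hR : 1 ≤ R) :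
    companion R d V A B E = blockCompanion fun j : Fin (2 * R) =>
      -((blochCoeff V A B E R (2 * R))⁻¹ * blochCoeff V A B E R j) := by
  simp only [← companionLastRow_eq_neg_inv_mul_blochCoeff V A B E hR]
  rfl

lemma sum_pow_smul_blochCoeff_mulVec_eq_zero_iff {z : ℂ} (hz : z ≠ 0) (u : Fin d → ℂ) :
    (∑ j ∈ range (2 * R + 1), z ^ j • blochCoeff V A B E R j) *ᵥ u = 0 ↔
      bloch R d V A B z *ᵥ u = E • u := by
  rw [sum_pow_smul_blochCoeff V A B E hz, smul_mulVec, smul_eq_zero_iff_right (pow_ne_zero R hz),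
    sub_mulVec, smul_mulVec, one_mulVec, sub_eq_zero]

lemma companion_mulVec_eq_smul_iff (hR : 1 ≤ R) (hAR : IsUnit (A R).det) {z : ℂ} (hz : z ≠ 0)
    (x : Fin (2 * R) × Fin d → ℂ) :
    companion R d V A B E *ᵥ x = z • x ↔
      ∃ u, x = geometricBlocks (2 * R) z u ∧ bloch R d V A B z *ᵥ u = E • u := by
  have hlead : IsUnit (blochCoeff V A B E R (2 * R)).det := by rwa [blochCoeff_two_mul V A B E hR]
  have hsize : 0 < 2 * R := by omega
  simp only [companion_eq_blockCompanion V A B E hR, blockCompanion_mulVec_eq_smul_iff hsize,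
    sum_neg_inv_mul_mulVec_eq_iff hlead, sum_pow_smul_blochCoeff_mulVec_eq_zero_iff V A B E hz]

end Bloch

theorem companion_eigenvalue_iff_bloch_eigenvalue (R d : ℕ) (hR : 1 ≤ R) (hd : 1 ≤ d)
    (V : Matrix (Fin d) (Fin d) ℂ) (A B : ℕ → Matrix (Fin d) (Fin d) ℂ)
    (hAR : IsUnit (A R).det) (E : ℂ) (z : ℂ) (hz : z ≠ 0) :
    (∃ x : Fin (2 * R) × Fin d → ℂ, x ≠ 0 ∧ (companion R d V A B E).mulVec x = z • x) ↔
    (∃ u : Fin d → ℂ, u ≠ 0 ∧ (bloch R d V A B z).mulVec u = E • u) := by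
  have hne {u : Fin d → ℂ} : geometricBlocks (2 * R) z u ≠ 0 ↔ u ≠ 0 :=
    (geometricBlocks_eq_zero_iff (by omega)).not
  simp only [companion_mulVec_eq_smul_iff V A B E hR hAR hz]
  constructor
  · rintro ⟨_, hx, u, rfl, hu⟩
    exact ⟨u, hne.1 hx, hu⟩
  · rintro ⟨u, hu0, hu⟩
    exact ⟨geometricBlocks (2 * R) z u, hne.2 hu0, u, rfl, hu⟩
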